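/- arXiv:2110.00447 — 3 statements merged into one kernel-verified Lean document; each statement's English description precedes it below -/
import Mathlib

section
/- Let m > 0 and u_max > 0, and let (x, y, z, ẋ, ẏ, ż) ∈ ℝ⁶ be a state satisfying (3n²x + 2nẏ)² < (u_max/m)², (2nẋ)² < (u_max/m)², and (n²z)² < (u_max/m)². Then there exists a control u = (u₁, u₂, u₃) with |uᵢ| ≤ u_max for i = 1, 2, 3 such that ẋ·(3n²x + 2nẏ + u₁/m) ≤ 0, ẏ·(−2nẋ + u₂/m) ≤ 0, and ż·(−n²z + u₃/m) ≤ 0; in particular the time derivatives of v_max² − ẋ², v_max² − ẏ², and v_max² − ż² along the controlled Clohessy–Wiltshire dynamics are all nonnegative at this state. -/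
/-!
Each component of the control acts on its own axis, and the hypotheses say that the drift
acceleration `a` along that axis satisfies `m * |a| ≤ umax`. Hence the control `-(m * a)` is
admissible and cancels the drift: all three accelerations vanish, so no speed grows.
-/

section LinearOrderedField

variable {K : Type*} [Field K] [LinearOrder K] [IsStrictOrderedRing K]

theorem exists_abs_le_and_add_div_eq_zero {a b m : K} (hm : m ≠ 0) (ha : |a| ≤ b / |m|) :
    ∃ u, |u| ≤ b ∧ a + u / m = 0 := by
  refine ⟨-(m * a), ?_, ?_⟩
  · rw [abs_neg, abs_mul]
    exact (le_div_iff₀' (abs_pos.mpr hm)).mp ha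
  · rw [neg_div, mul_div_cancel_left₀ a hm, add_neg_cancel]

theorem abs_le_div_abs_of_sq_le_div_sq {a b m : K} (hb : 0 ≤ b) (h : a ^ 2 ≤ (b / m) ^ 2) :
    |a| ≤ b / |m| := by
  simpa only [abs_div, abs_of_nonneg hb] using sq_le_sq.mp h

theorem max_velocity_control_invariance_general
    {n m umax x z xd yd : K} (hm : m ≠ 0) (hu : 0 ≤ umax)
    (h1 : (3 * n ^ 2 * x + 2 * n * yd) ^ 2 ≤ (umax / m) ^ 2)
    (h2 : (2 * n * xd) ^ 2 ≤ (umax / m) ^ 2)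
    (h3 : (n ^ 2 * z) ^ 2 ≤ (umax / m) ^ 2) :
    ∃ u₁ u₂ u₃ : K, |u₁| ≤ umax ∧ |u₂| ≤ umax ∧ |u₃| ≤ umax ∧
      3 * n ^ 2 * x + 2 * n * yd + u₁ / m = 0 ∧
      -(2 * n) * xd + u₂ / m = 0 ∧
      -n ^ 2 * z + u₃ / m = 0 := by
  have cancel {a : K} (ha : a ^ 2 ≤ (umax / m) ^ 2) : ∃ u, |u| ≤ umax ∧ a + u / m = 0 :=
    exists_abs_le_and_add_div_eq_zero hm (abs_le_div_abs_of_sq_le_div_sq hu ha)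
  obtain ⟨u₁, hu₁, hx⟩ := cancel h1
  obtain ⟨u₂, hu₂, hy⟩ := cancel (a := -(2 * n) * xd) (by rwa [neg_mul, neg_sq])
  obtain ⟨u₃, hu₃, hz⟩ := cancel (a := -n ^ 2 * z) (by rwa [neg_mul, neg_sq])
  exact ⟨u₁, u₂, u₃, hu₁, hu₂, hu₃, hx, hy, hz⟩

end LinearOrderedField

/-- Lemma 2: control invariance of the maximum velocity limits for the
controlled Clohessy–Wiltshire dynamics. -/
theorem max_velocity_control_invariance
    (n m umax : ℝ) (hm : 0 < m) (hu : 0 < umax)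
    (x y z xd yd zd : ℝ)
    (h1 : (3 * n ^ 2 * x + 2 * n * yd) ^ 2 < (umax / m) ^ 2)
    (h2 : (2 * n * xd) ^ 2 < (umax / m) ^ 2)
    (h3 : (n ^ 2 * z) ^ 2 < (umax / m) ^ 2) :
    ∃ u₁ u₂ u₃ : ℝ, |u₁| ≤ umax ∧ |u₂| ≤ umax ∧ |u₃| ≤ umax ∧
      xd * (3 * n ^ 2 * x + 2 * n * yd + u₁ / m) ≤ 0 ∧
      yd * (-(2 * n) * xd + u₂ / m) ≤ 0 ∧
      zd * (-n ^ 2 * z + u₃ / m) ≤ 0 := by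
  obtain ⟨u₁, u₂, u₃, hu₁, hu₂, hu₃, hx, hy, hz⟩ :=
    max_velocity_control_invariance_general hm.ne' hu.le h1.le h2.le h3.le
  exact ⟨u₁, u₂, u₃, hu₁, hu₂, hu₃, (mul_eq_zero_of_right xd hx).le,
    (mul_eq_zero_of_right yd hy).le, (mul_eq_zero_of_right zd hz).le⟩
end

section
/- Let n > 0, ν₁ ≥ 2n, ν₀ ≥ 0, b > 0, and c ∈ ℝ with c²·n² ≤ b²·(ν₁² − 4n²). Let γ(t) = (b·sin(nt + ν), 2b·cos(nt + ν), c·sin(nt + ψ)) for arbitrary phases ν, ψ ∈ ℝ. Then for all t ∈ ℝ, the distance-dependent speed limit holds along γ: √(γ₁'(t)² + γ₂'(t)² + γ₃'(t)²) ≤ ν₀ + ν₁·√(γ₁(t)² + γ₂(t)² + γ₃(t)²). -/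
/-!
The speed along the trajectory is at most `n √(4b² + c²)`, and the distance to the origin never
drops below the semi-minor axis `b`. The condition on `c` is a rearrangement of
`n² (4b² + c²) ≤ ν₁² b²`, which says that these two extreme values already satisfy
`speed ≤ ν₁ * distance`.
-/

section Ellipse

variable {p q : ℝ}

theorem sq_le_sq_mul_sin_add_sq_mul_cos (hpq : p ^ 2 ≤ q ^ 2) (x : ℝ) :
    p ^ 2 ≤ (p * Real.sin x) ^ 2 + (q * Real.cos x) ^ 2 :=
  calc
    p ^ 2 = p ^ 2 * Real.sin x ^ 2 + p ^ 2 * Real.cos x ^ 2 := by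
      rw [← mul_add, Real.sin_sq_add_cos_sq, mul_one]
    _ ≤ p ^ 2 * Real.sin x ^ 2 + q ^ 2 * Real.cos x ^ 2 := by gcongr
    _ = (p * Real.sin x) ^ 2 + (q * Real.cos x) ^ 2 := by rw [mul_pow, mul_pow]

theorem sq_mul_cos_add_sq_mul_sin_le_sq (hpq : p ^ 2 ≤ q ^ 2) (x : ℝ) :
    (p * Real.cos x) ^ 2 + (q * Real.sin x) ^ 2 ≤ q ^ 2 :=
  calc
    (p * Real.cos x) ^ 2 + (q * Real.sin x) ^ 2
      = p ^ 2 * Real.cos x ^ 2 + q ^ 2 * Real.sin x ^ 2 := by rw [mul_pow, mul_pow]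
    _ ≤ q ^ 2 * Real.cos x ^ 2 + q ^ 2 * Real.sin x ^ 2 := by gcongr
    _ = q ^ 2 := by rw [← mul_add, Real.cos_sq_add_sin_sq, mul_one]

end Ellipse

section Harmonic

variable (a n φ t : ℝ)

theorem deriv_const_mul_sin_mul_add :
    deriv (fun s => a * Real.sin (n * s + φ)) t = n * (a * Real.cos (n * t + φ)) := by
  have phase : HasDerivAt (fun s => n * s + φ) n t := (hasDerivAt_const_mul n).add_const φ
  rw [(phase.sin.const_mul a).deriv]
  ring

theorem deriv_const_mul_cos_mul_add :
    deriv (fun s => a * Real.cos (n * s + φ)) t = -(n * (a * Real.sin (n * t + φ))) := by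
  have phase : HasDerivAt (fun s => n * s + φ) n t := (hasDerivAt_const_mul n).add_const φ
  rw [(phase.cos.const_mul a).deriv]
  ring

end Harmonic

theorem sq_le_two_mul_sq (b : ℝ) : b ^ 2 ≤ (2 * b) ^ 2 := by
  linarith [sq_nonneg b, mul_pow 2 b 2]

section NaturalMotionTrajectory

variable (n b c ν ψ t : ℝ)

theorem sq_le_sq_distance_nmt :
    b ^ 2 ≤ (b * Real.sin (n * t + ν)) ^ 2 + (2 * b * Real.cos (n * t + ν)) ^ 2 +
      (c * Real.sin (n * t + ψ)) ^ 2 :=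
  le_add_of_le_of_nonneg (sq_le_sq_mul_sin_add_sq_mul_cos (sq_le_two_mul_sq b) _) (sq_nonneg _)

theorem sq_speed_nmt_le :
    deriv (fun s => b * Real.sin (n * s + ν)) t ^ 2 +
        deriv (fun s => 2 * b * Real.cos (n * s + ν)) t ^ 2 +
        deriv (fun s => c * Real.sin (n * s + ψ)) t ^ 2 ≤
      n ^ 2 * (4 * b ^ 2 + c ^ 2) := by
  have in_plane := sq_mul_cos_add_sq_mul_sin_le_sq (sq_le_two_mul_sq b) (n * t + ν)
  have out_of_plane : (c * Real.cos (n * t + ψ)) ^ 2 ≤ c ^ 2 := by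
    rw [mul_pow]
    exact mul_le_of_le_one_right (sq_nonneg c) (Real.cos_sq_le_one _)
  rw [deriv_const_mul_sin_mul_add, deriv_const_mul_cos_mul_add, deriv_const_mul_sin_mul_add,
    neg_sq, mul_pow n, mul_pow n, mul_pow n, ← mul_add, ← mul_add]
  gcongr
  linarith

end NaturalMotionTrajectory

/-- First half of Lemma 3: elliptical NMTs whose parameters satisfy
`c²n² ≤ b²(ν₁² − 4n²)` satisfy the distance-dependent speed limit for all
time. -/
theorem nmt_satisfies_speed_limit
    (n ν₀ ν₁ b c ν ψ : ℝ) (hn : 0 < n) (hν₁ : ν₁ ≥ 2 * n) (hν₀ : 0 ≤ ν₀)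
    (hb : 0 < b) (hc : c ^ 2 * n ^ 2 ≤ b ^ 2 * (ν₁ ^ 2 - 4 * n ^ 2))
    (γ₁ γ₂ γ₃ : ℝ → ℝ)
    (hγ₁ : γ₁ = fun t => b * Real.sin (n * t + ν))
    (hγ₂ : γ₂ = fun t => 2 * b * Real.cos (n * t + ν))
    (hγ₃ : γ₃ = fun t => c * Real.sin (n * t + ψ)) :
    ∀ t : ℝ,
      Real.sqrt (deriv γ₁ t ^ 2 + deriv γ₂ t ^ 2 + deriv γ₃ t ^ 2) ≤
        ν₀ + ν₁ * Real.sqrt (γ₁ t ^ 2 + γ₂ t ^ 2 + γ₃ t ^ 2) := by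
  subst hγ₁ hγ₂ hγ₃
  intro t
  have hν₁_nonneg : 0 ≤ ν₁ := by linarith
  refine le_add_of_nonneg_of_le hν₀ (Real.sqrt_le_iff.mpr ⟨by positivity, ?_⟩)
  rw [mul_pow, Real.sq_sqrt (by positivity)]
  calc
    _ ≤ n ^ 2 * (4 * b ^ 2 + c ^ 2) := sq_speed_nmt_le n b c ν ψ t
    _ ≤ ν₁ ^ 2 * b ^ 2 := by linarith
    _ ≤ _ := mul_le_mul_of_nonneg_left (sq_le_sq_distance_nmt n b c ν ψ t) (sq_nonneg ν₁)
end

section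
/- Let n > 0, v_max ≥ 0, 0 ≤ b ≤ v_max/(2n), 0 ≤ c ≤ v_max/n, and ν, ψ ∈ ℝ, and let γ(t) = (b·sin(nt + ν), 2b·cos(nt + ν), c·sin(nt + ψ)). Then for all t ∈ ℝ the maximum velocity limits hold along γ: |γ₁'(t)| ≤ v_max, |γ₂'(t)| ≤ v_max, and |γ₃'(t)| ≤ v_max. -/
theorem deriv_comp_mul_add {𝕜 F : Type*} [NontriviallyNormedField 𝕜]
    [NormedAddCommGroup F] [NormedSpace 𝕜 F] (f : 𝕜 → F) (a b x : 𝕜) :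
    deriv (fun y => f (a * y + b)) x = a • deriv f (a * x + b) := by
  rw [deriv_comp_mul_left a (fun y => f (y + b)), deriv_comp_add_const]

theorem abs_deriv_const_mul_sin_le (A ω φ t : ℝ) :
    |deriv (fun s => A * Real.sin (ω * s + φ)) t| ≤ |A * ω| := by
  rw [deriv_const_mul_field, deriv_comp_mul_add, Real.deriv_sin, smul_eq_mul, ← mul_assoc, abs_mul]
  exact mul_le_of_le_one_right (abs_nonneg _) (Real.abs_cos_le_one _)

theorem abs_deriv_const_mul_cos_le (A ω φ t : ℝ) :
    |deriv (fun s => A * Real.cos (ω * s + φ)) t| ≤ |A * ω| := by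
  simpa only [← add_assoc, Real.sin_add_pi_div_two] using
    abs_deriv_const_mul_sin_le A ω (φ + Real.pi / 2) t

/-- Second half of Lemma 3: elliptical NMTs with `b ≤ v_max/(2n)` and
`c ≤ v_max/n` satisfy the maximum velocity limits for all time. -/
theorem nmt_satisfies_velocity_limits
    (n vmax b c ν ψ : ℝ) (hn : 0 < n) (hvmax : 0 ≤ vmax)
    (hb0 : 0 ≤ b) (hb : b ≤ vmax / (2 * n))
    (hc0 : 0 ≤ c) (hc : c ≤ vmax / n)
    (γ₁ γ₂ γ₃ : ℝ → ℝ)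
    (hγ₁ : γ₁ = fun t => b * Real.sin (n * t + ν))
    (hγ₂ : γ₂ = fun t => 2 * b * Real.cos (n * t + ν))
    (hγ₃ : γ₃ = fun t => c * Real.sin (n * t + ψ)) :
    ∀ t : ℝ, |deriv γ₁ t| ≤ vmax ∧ |deriv γ₂ t| ≤ vmax ∧
      |deriv γ₃ t| ≤ vmax := by
  intro t
  subst hγ₁ hγ₂ hγ₃
  have abs_mul_le {A : ℝ} (hA₀ : 0 ≤ A) (hA : A ≤ vmax / n) : |A * n| ≤ vmax := by
    rw [abs_of_nonneg (mul_nonneg hA₀ hn.le)]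
    exact (le_div_iff₀ hn).mp hA
  have h2b : 2 * b ≤ vmax / n := by
    rwa [mul_comm 2 n, ← div_div, le_div_iff₀' two_pos] at hb
  have hb' : b ≤ vmax / n := by linarith
  exact ⟨(abs_deriv_const_mul_sin_le b n ν t).trans (abs_mul_le hb0 hb'),
    (abs_deriv_const_mul_cos_le (2 * b) n ν t).trans (abs_mul_le (by positivity) h2b),
    (abs_deriv_const_mul_sin_le c n ψ t).trans (abs_mul_le hc0 hc)⟩
end
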